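/- Let I be a nonempty finite index set, and let A, B, D, F > 0 be reals. For each n ∈ I let σ_n > 0, f_n > 0, β_n > 0, μ_n, and τ > 0 be reals satisfying the stationarity conditions τ·β_n² = σ_n·B + μ_n·F and 2·μ_n·D·f_n³ = A·σ_n for every n ∈ I, together with Σ_{n∈I} β_n = 1. Then for every n ∈ I: β_n = σ_n^{1/2}·(B + (A·F)/(2·D·f_n³))^{1/2} / ( Σ_{m∈I} σ_m^{1/2}·(B + (A·F)/(2·D·f_m³))^{1/2} ). -/

import Mathlib

/-!
Stationarity says that `√σₙ √(Bₙ + Aₙ Fₙ / (2 Dₙ fₙ³)) = √τ βₙ`: the weights on the left are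
proportional to the bandwidth ratios, with a factor `√τ` that does not depend on `n`. Since the
ratios sum to one, dividing each weight by the sum of all of them cancels this factor.
-/

theorem eq_div_tsum_of_hasSum_one {ι K : Type*} [Semifield K] [TopologicalSpace K]
    [IsTopologicalSemiring K] [T2Space K] {p w : ι → K} {c : K} (hc : c ≠ 0) (hp : HasSum p 1)
    (hw : ∀ n, w n = c * p n) (n : ι) : p n = w n / ∑' m, w m := by
  have w_sum : ∑' m, w m = c := by
    simpa only [← hw, mul_one] using (hp.mul_left c).tsum_eq
  rw [w_sum, hw n, mul_div_cancel_left₀ _ hc]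

theorem sqrt_mul_sqrt_of_mul_sq_eq {a b c x : ℝ} (ha : 0 ≤ a) (hx : 0 ≤ x)
    (h : c * x ^ 2 = a * b) : √a * √b = √c * x := by
  rw [← Real.sqrt_mul ha, ← h, Real.sqrt_mul' _ (sq_nonneg x), Real.sqrt_sq hx]

section Stationarity

variable {K : Type*} [Field K] [NeZero (2 : K)] {A B D F σ f β μ τ : K}

theorem energy_multiplier_eq (hD : D ≠ 0) (hf : f ≠ 0)
    (h_freq : 2 * μ * D * f ^ 3 = A * σ) : μ = A * σ / (2 * D * f ^ 3) := by
  have h_ne : 2 * D * f ^ 3 ≠ 0 := mul_ne_zero (mul_ne_zero two_ne_zero hD) (pow_ne_zero 3 hf)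
  rw [eq_div_iff h_ne, ← h_freq]
  ring

theorem bandwidth_multiplier_mul_sq_eq (hD : D ≠ 0) (hf : f ≠ 0)
    (h_band : τ * β ^ 2 = σ * B + μ * F) (h_freq : 2 * μ * D * f ^ 3 = A * σ) :
    τ * β ^ 2 = σ * (B + A * F / (2 * D * f ^ 3)) := by
  rw [h_band, energy_multiplier_eq hD hf h_freq]
  ring

end Stationarity

/-- In the paper `A n = |𝒟ₙ| c_v(ε)` and `D n = (ζ/2) |𝒟ₙ| c_v(ε)` vary with the vehicle `n`
through its data set `𝒟ₙ`. -/
theorem kkt_optimal_bandwidth_ratio_general {ι : Type*} {A B D F σ f β μ : ι → ℝ} {τ : ℝ}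
    (hD : ∀ n, D n ≠ 0) (hf : ∀ n, f n ≠ 0) (hσ : ∀ n, 0 ≤ σ n) (hβ : ∀ n, 0 ≤ β n) (hτ : 0 < τ)
    (h_band : ∀ n, τ * β n ^ 2 = σ n * B n + μ n * F n)
    (h_freq : ∀ n, 2 * μ n * D n * f n ^ 3 = A n * σ n) (h_sum : HasSum β 1) (n : ι) :
    β n = √(σ n) * √(B n + A n * F n / (2 * D n * f n ^ 3)) /
      ∑' m, √(σ m) * √(B m + A m * F m / (2 * D m * f m ^ 3)) := by
  have weight_eq (m : ι) :
      √(σ m) * √(B m + A m * F m / (2 * D m * f m ^ 3)) = √τ * β m :=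
    sqrt_mul_sqrt_of_mul_sq_eq (hσ m) (hβ m) <|
      bandwidth_multiplier_mul_sq_eq (hD m) (hf m) (h_band m) (h_freq m)
  exact eq_div_tsum_of_hasSum_one (Real.sqrt_pos.2 hτ).ne' h_sum weight_eq n

/-- Closed-form optimal bandwidth ratio (equation (50) of the paper): eliminating the
multipliers `μₙ` and `τ` from the KKT stationarity conditions
`τ βₙ² = σₙ B + μₙ F` and `2 μₙ D fₙ³ = A σₙ` together with `∑ βₙ = 1` yields
`βₙ = σₙ^{1/2} (B + A F/(2 D fₙ³))^{1/2} / ∑ₘ σₘ^{1/2} (B + A F/(2 D fₘ³))^{1/2}`. -/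
theorem kkt_optimal_bandwidth_ratio
    {ι : Type*} [Fintype ι] [Nonempty ι]
    (A B D F : ℝ) (hA : 0 < A) (hB : 0 < B) (hD : 0 < D) (hF : 0 < F)
    (σ f β : ι → ℝ) (μ : ι → ℝ) (τ : ℝ)
    (hσ : ∀ n, 0 < σ n) (hf : ∀ n, 0 < f n) (hβ : ∀ n, 0 < β n) (hτ : 0 < τ)
    (hst1 : ∀ n, τ * (β n) ^ 2 = σ n * B + μ n * F)
    (hst2 : ∀ n, 2 * μ n * D * (f n) ^ 3 = A * σ n)
    (hsum : ∑ n, β n = 1) :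
    ∀ n, β n = Real.sqrt (σ n) * Real.sqrt (B + A * F / (2 * D * (f n) ^ 3)) /
      ∑ m, Real.sqrt (σ m) * Real.sqrt (B + A * F / (2 * D * (f m) ^ 3)) := by
  simpa only [tsum_fintype] using kkt_optimal_bandwidth_ratio_general (fun _ ↦ hD.ne')
    (fun n ↦ (hf n).ne') (fun n ↦ (hσ n).le) (fun n ↦ (hβ n).le) hτ hst1 hst2
    (hsum ▸ hasSum_fintype β)
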